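/- Let 2 ≤ i ≤ k, n ≥ i - 1, and 1 ≤ r ≤ d_{n+1}, with moreover r ≤ d_{n+1} - 1 when i = k. Put v := s_n^r s_{n-1}^{d_n} s_{n-2}^{d_{n-1}} ⋯ s_{n+2-i}^{d_{n+3-i}} s_{n+1-i}. Then the set of words w of length |v| such that w·w is a factor of 𝐬 is exactly { C_j(v) : 0 ≤ j ≤ |D_{n+1-i}| }, and it has exactly |D_{n+1-i}| + 1 elements. -/

import Mathlib

/-!
Write `A n = a (n % k + 1)` and `m n = d (n + 1)`. Let `φ_n` be the morphism fixing `A n` and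
sending every other letter `b` to `(A n)^(m n) b`. The infinite word `𝐬` is the image under
`Φ_n = φ_0 ∘ ⋯ ∘ φ_{n-1}` of an infinite word `x_n` of the same kind, with directive sequence
shifted by `n`. Moreover `s_n = Φ_n(A n)` (`s_eq`), and the word `v` of the theorem is
`Φ_n((A n)^r A (n+g))` with `g = k + 1 - i` (`V`).

The squares are found by desubstitution. An occurrence of `w w` extends to the left to a run, a
pair of positions `q < q + |w|` followed by the same letters and preceded by different ones. In
`x_n`, a run comes from a run of `x_{n+1}` unless both positions are followed by a short power of
`A n` only (`run_descent`, `Exc`). Each descent adds to the common factor the common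
continuation `(A n)^(m n)` of all cut points, and these contributions sum to `PP n` at level `0`.
Images of letters grow with the level, so the descent ends at some level `n'`. Comparing lengths
there (`classify`), the period is either `p |s_{n'}|` with `p ≤ m n' + 1`, or the length of
`Φ_{n'}((A n')^j A (n'+g'))` with `j < m n'`; in the second case the squares start in the first
`PP n' - |Φ_{n'}(A (n'+g'))| + 1` positions of the run, and so they are consecutive conjugates of
the word `Φ_{n'}((A n')^j A (n'+g'))`. The lengths of the second kind are pairwise distinct
(`len_unique`) and `|v|` is none of the first kind (`len_ne_power`), so the length of `v`
determines `v` and the number of admissible conjugates (`squares_eq`).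

Conversely `(A n)^r A (n+g) (A n)^r` occurs in `x_n`, and its image is followed by the common
continuation of length `PP n`, which gives all these squares (`run_exists`, `agree_lift`). The
conjugates are distinct because `v` is primitive: if `v` had the letter counts of a `t`-th power
then so would `(A n)^r A (n+g)` (`Ph_dvd`), which contains `A (n+g)` only once. Finally
`|D_q| = PP (q+1) - |s_q|` (`D_length`), and `PP - |Φ(A q)|` does not change from level `q + 1`
up to level `n = q + i - 1` (`PP_sub_invariant`).
-/

namespace Epi

variable {α : Type*}

/-- `pw w p` is the `p`-fold concatenation `w^p`. -/
def pw (w : List α) : ℕ → List α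
  | 0 => []
  | p + 1 => w ++ pw w p

/-- `S k a d m` is the word `s_{m-(k-1)}` of the paper (shifted indexing: `m : ℕ`
ranges over the indices `n ≥ 1-k`). -/
def S (k : ℕ) (a : ℕ → α) (d : ℕ → ℕ) : ℕ → List α
  | m =>
    if h : m < max k 1 then [a ((m + 1) % k + 1)]
    else
      ((List.range (k - 1)).map
          (fun j => pw (S k a d (m - 1 - j)) (d (m + 1 - k - j)))).flatten ++
        S k a d (m - max k 1)
  termination_by m => m
  decreasing_by all_goals omega

/-- `s k a d n` is the word `s_n`, for `n ≥ 0`. -/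
def s (k : ℕ) (a : ℕ → α) (d : ℕ → ℕ) (n : ℕ) : List α :=
  S k a d (n + (k - 1))

/-- `D k a d n` is the word `D_n = s_n^{d_{n+1}-1} s_{n-1}^{d_n} ⋯ s_1^{d_2} s_0^{d_1}`. -/
def D (k : ℕ) (a : ℕ → α) (d : ℕ → ℕ) (n : ℕ) : List α :=
  pw (s k a d n) (d (n + 1) - 1) ++
    ((List.range n).map (fun j => pw (s k a d (n - 1 - j)) (d (n - j)))).flatten

/-- `G k a d n r` is the word `G_{n,r}`: `s_n` with its prefix of length `|D_{n-r}|` removed. -/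
def G (k : ℕ) (a : ℕ → α) (d : ℕ → ℕ) (n r : ℕ) : List α :=
  (s k a d n).drop (D k a d (n - r)).length

/-- `Om k a d n r` is the set `Ω_n^r` of singular `n`-words of the `r`-th kind. -/
def Om (k : ℕ) (a : ℕ → α) (d : ℕ → ℕ) (n r : ℕ) : Set (List α) :=
  { w | w.length = (s k a d n).length ∧
      w <:+:
        ((((G k a d n r).reverse ++ D k a d (n - r) ++ G k a d n r).drop 1).dropLast) }

/-- `w` is a factor of the infinite word `𝐬`. -/
def FactorS (k : ℕ) (a : ℕ → α) (d : ℕ → ℕ) (w : List α) : Prop :=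
  ∃ N, w <:+: s k a d N


/-! ### The morphisms and the infinite words -/

open Classical in
/-- The morphism fixing the letter `A` and sending every other letter `b` to `A^m b`. -/
noncomputable def ph (A : α) (m : ℕ) (w : List α) : List α :=
  w.flatMap fun b => if b = A then [b] else List.replicate m A ++ [b]

/-- The composition `ph (A 0) (m 0) ∘ ⋯ ∘ ph (A (n-1)) (m (n-1))`. -/
noncomputable def Ph (A : ℕ → α) (m : ℕ → ℕ) : ℕ → List α → List α
  | 0, w => w
  | n + 1, w => Ph A m n (ph (A n) (m n) w)

/-- `W A m n N` is the image of the letter `A (n+N)` under the `N` morphisms of index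
`n, …, n+N-1`. -/
noncomputable def W (A : ℕ → α) (m : ℕ → ℕ) : ℕ → ℕ → List α
  | n, 0 => [A n]
  | n, N + 1 => ph (A n) (m n) (W A m (n + 1) N)

/-- The infinite word of level `n`: the limit of the words `W A m n N`, which have length more
than `N` (so the default value of `getD` is never used). -/
noncomputable def x (A : ℕ → α) (m : ℕ → ℕ) (n q : ℕ) : α :=
  (W A m n q).getD q (A 0)

/-- The factor of length `l` at position `q` of the infinite word `u`. -/
def seg (u : ℕ → α) (q l : ℕ) : List α := (List.range l).map fun t => u (q + t)

/-- The cut points of level `n`: the image of the prefix of length `i` of the word of level `n+1`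
has length `cut A m n i`. -/
noncomputable def cut (A : ℕ → α) (m : ℕ → ℕ) (n i : ℕ) : ℕ :=
  (ph (A n) (m n) (seg (x A m (n + 1)) 0 i)).length

/-- Standing assumptions on the directive sequence `A 0 ^ m 0, A 1 ^ m 1, …`. -/
structure Hyp (A : ℕ → α) (m : ℕ → ℕ) : Prop where
  pos : ∀ n, 1 ≤ m n
  ne : ∀ n, A n ≠ A (n + 1)

@[simp] lemma seg_length (u : ℕ → α) (q l : ℕ) : (seg u q l).length = l := by simp [seg]

@[simp] lemma seg_getElem (u : ℕ → α) (q l t : ℕ) (h : t < (seg u q l).length) :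
    (seg u q l)[t] = u (q + t) := by simp [seg]

lemma seg_add (u : ℕ → α) (q l l' : ℕ) : seg u q (l + l') = seg u q l ++ seg u (q + l) l' := by
  simp [seg, List.range_add, Nat.add_assoc]

lemma seg_eq_iff (u : ℕ → α) (q q' l : ℕ) :
    seg u q l = seg u q' l ↔ ∀ t < l, u (q + t) = u (q' + t) := by
  simp [seg]

lemma ph_append (A : α) (m : ℕ) (w w' : List α) : ph A m (w ++ w') = ph A m w ++ ph A m w' := by
  simp [ph]

lemma ph_nil (A : α) (m : ℕ) : ph A m [] = [] := by simp [ph]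

lemma ph_self (A : α) (m : ℕ) : ph A m [A] = [A] := by simp [ph]

lemma ph_ne (A : α) (m : ℕ) {b : α} (h : b ≠ A) :
    ph A m [b] = List.replicate m A ++ [b] := by simp [ph, h]

lemma ph_cons (A : α) (m : ℕ) (b : α) (w : List α) : ph A m (b :: w) = ph A m [b] ++ ph A m w := by
  simp [ph]

lemma ph_length_le (A : α) (m : ℕ) (w : List α) : w.length ≤ (ph A m w).length := by
  induction w with
  | nil => simp
  | cons b w ih =>
    rw [ph_cons]
    by_cases h : b = A
    · subst h; simp [ph_self]; omega
    · simp [ph_ne _ _ h]; omega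

lemma Ph_append (A : ℕ → α) (m : ℕ → ℕ) (n : ℕ) (w w' : List α) :
    Ph A m n (w ++ w') = Ph A m n w ++ Ph A m n w' := by
  induction n generalizing w w' with
  | zero => rfl
  | succ n ih => simp [Ph, ph_append, ih]

lemma Ph_nil (A : ℕ → α) (m : ℕ → ℕ) (n : ℕ) : Ph A m n [] = [] := by
  induction n with
  | zero => rfl
  | succ n ih => simp [Ph, ph_nil, ih]

lemma pw_length (w : List α) (p : ℕ) : (pw w p).length = p * w.length := by
  induction p with
  | zero => simp [pw]
  | succ p ih => simp [pw, ih]; ring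

lemma Ph_replicate (A : ℕ → α) (m : ℕ → ℕ) (n r : ℕ) (b : α) :
    Ph A m n (List.replicate r b) = pw (Ph A m n [b]) r := by
  induction r with
  | zero => simp [Ph_nil, pw]
  | succ r ih => rw [List.replicate_succ, ← List.singleton_append, Ph_append, ih]; rfl

lemma Ph_succ_self (A : ℕ → α) (m : ℕ → ℕ) (n : ℕ) : Ph A m (n + 1) [A n] = Ph A m n [A n] := by
  simp [Ph, ph_self]

lemma Ph_succ_ne (A : ℕ → α) (m : ℕ → ℕ) (n : ℕ) {b : α} (h : b ≠ A n) :
    Ph A m (n + 1) [b] = pw (Ph A m n [A n]) (m n) ++ Ph A m n [b] := by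
  simp [Ph, ph_ne _ _ h, Ph_append, Ph_replicate]

lemma Ph_W (A : ℕ → α) (m : ℕ → ℕ) (n N : ℕ) :
    Ph A m n (W A m n N) = Ph A m (n + N) [A (n + N)] := by
  induction N generalizing n with
  | zero => rfl
  | succ N ih =>
    have h := ih (n + 1)
    rw [show n + 1 + N = n + (N + 1) by omega] at h
    rw [← h]; rfl

section Words

variable {A : ℕ → α} {m : ℕ → ℕ}

lemma W_cons (H : Hyp A m) (n N : ℕ) : ∃ l, W A m n N = A n :: l := by
  induction N generalizing n with
  | zero => exact ⟨[], rfl⟩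
  | succ N ih =>
    obtain ⟨l, hl⟩ := ih (n + 1)
    obtain ⟨p, hp⟩ : ∃ p, m n = p + 1 := ⟨m n - 1, by have := H.pos n; omega⟩
    rw [W, hl, ph_cons, ph_ne _ _ (H.ne n).symm, hp]
    exact ⟨_, rfl⟩

lemma W_length (H : Hyp A m) (n N : ℕ) : N < (W A m n N).length := by
  induction N generalizing n with
  | zero => simp [W]
  | succ N ih =>
    obtain ⟨l, hl⟩ := W_cons H (n + 1) N
    have h1 := ih (n + 1)
    have := H.pos n
    have h2 := ph_length_le (A n) (m n) l
    rw [W, hl, ph_cons, ph_ne _ _ (H.ne n).symm]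
    rw [hl] at h1
    simp at h1 ⊢
    omega

lemma W_prefix_succ (H : Hyp A m) (n N : ℕ) : W A m n N <+: W A m n (N + 1) := by
  induction N generalizing n with
  | zero =>
    obtain ⟨l, hl⟩ := W_cons H n 1
    rw [hl]; exact ⟨l, rfl⟩
  | succ N ih =>
    obtain ⟨l, hl⟩ := ih (n + 1)
    rw [W, W, ← hl, ph_append]
    exact ⟨_, rfl⟩

lemma W_prefix (H : Hyp A m) (n : ℕ) {N M : ℕ} (h : N ≤ M) : W A m n N <+: W A m n M := by
  induction M, h using Nat.le_induction with
  | base => exact List.prefix_rfl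
  | succ M _ ih => exact ih.trans (W_prefix_succ H n M)

lemma W_getElem (H : Hyp A m) (n N q : ℕ) (h : q < (W A m n N).length) :
    (W A m n N)[q] = x A m n q := by
  have hq := W_length H n q
  rw [x, List.getD_eq_getElem _ _ hq]
  rcases le_total N q with h' | h'
  · exact (W_prefix H n h').getElem h
  · exact ((W_prefix H n h').getElem hq).symm

lemma W_eq_seg (H : Hyp A m) (n N : ℕ) :
    W A m n N = seg (x A m n) 0 (W A m n N).length := by
  apply List.ext_getElem (by simp)
  intro q h1 h2
  simp [W_getElem H]

lemma prefix_eq_seg (H : Hyp A m) (n N : ℕ) {w : List α} (h : w <+: W A m n N) :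
    w = seg (x A m n) 0 w.length := by
  apply List.ext_getElem (by simp)
  intro q h1 h2
  have := h.length_le
  rw [h.getElem h1, W_getElem H]
  simp

lemma seg_prefix_W (H : Hyp A m) (n i : ℕ) : seg (x A m n) 0 i <+: W A m n i := by
  obtain ⟨l, hl⟩ : ∃ l, (W A m n i).length = i + l :=
    ⟨(W A m n i).length - i, by have := W_length H n i; omega⟩
  rw [W_eq_seg H n i, hl, seg_add]
  exact ⟨_, rfl⟩

lemma ph_seg (H : Hyp A m) (n i : ℕ) :
    ph (A n) (m n) (seg (x A m (n + 1)) 0 i) = seg (x A m n) 0 (cut A m n i) := by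
  apply prefix_eq_seg H n (i + 1)
  obtain ⟨l, hl⟩ := seg_prefix_W H (n + 1) i
  rw [W, ← hl, ph_append]
  exact ⟨_, rfl⟩

lemma cut_zero (n : ℕ) : cut A m n 0 = 0 := by simp [cut, seg, ph]

lemma cut_block (H : Hyp A m) (n i : ℕ) :
    seg (x A m n) (cut A m n i) (ph (A n) (m n) [x A m (n + 1) i]).length
        = ph (A n) (m n) [x A m (n + 1) i] ∧
      cut A m n (i + 1) = cut A m n i + (ph (A n) (m n) [x A m (n + 1) i]).length := by
  have e : seg (x A m (n + 1)) 0 (i + 1) = seg (x A m (n + 1)) 0 i ++ [x A m (n + 1) i] := by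
    rw [seg_add]; simp [seg]
  have h2 : cut A m n (i + 1) = cut A m n i + (ph (A n) (m n) [x A m (n + 1) i]).length := by
    rw [cut, e, ph_append, List.length_append]; rfl
  refine ⟨?_, h2⟩
  have h := ph_seg H n (i + 1)
  rw [e, ph_append, ph_seg H n i, h2, seg_add, Nat.zero_add] at h
  exact (List.append_cancel_left h).symm

lemma cut_self (H : Hyp A m) {n i : ℕ} (h : x A m (n + 1) i = A n) :
    cut A m n (i + 1) = cut A m n i + 1 ∧ x A m n (cut A m n i) = A n := by
  obtain ⟨h1, h2⟩ := cut_block H n i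
  rw [h, ph_self] at h1 h2
  refine ⟨h2, ?_⟩
  simpa [seg] using h1

lemma cut_ne (H : Hyp A m) {n i : ℕ} (h : x A m (n + 1) i ≠ A n) :
    cut A m n (i + 1) = cut A m n i + m n + 1 ∧
      (∀ t < m n, x A m n (cut A m n i + t) = A n) ∧
      x A m n (cut A m n i + m n) = x A m (n + 1) i := by
  obtain ⟨h1, h2⟩ := cut_block H n i
  rw [ph_ne _ _ h] at h1 h2
  have key : ∀ t (ht : t < m n + 1), x A m n (cut A m n i + t) =
      (List.replicate (m n) (A n) ++ [x A m (n + 1) i])[t]'(by simpa using ht) := by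
    intro t ht
    rw [← List.getElem_of_eq h1 (by simpa using ht), seg_getElem]
  refine ⟨by simpa [Nat.add_assoc] using h2, fun t ht => ?_, ?_⟩
  · rw [key t (by omega), List.getElem_append_left (by simpa using ht)]; simp
  · rw [key _ (by omega), List.getElem_append_right (by simp)]; simp

lemma cut_lt (H : Hyp A m) (n i : ℕ) : cut A m n i < cut A m n (i + 1) := by
  by_cases h : x A m (n + 1) i = A n
  · have := (cut_self H h).1; omega
  · have := (cut_ne H h).1; omega

lemma cut_strictMono (H : Hyp A m) (n : ℕ) : StrictMono (cut A m n) :=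
  strictMono_nat_of_lt_succ (cut_lt H n)

lemma exists_cut (H : Hyp A m) (n q : ℕ) : ∃ i, cut A m n i ≤ q ∧ q < cut A m n (i + 1) := by
  induction q with
  | zero => exact ⟨0, by simp [cut_zero], by have := cut_lt H n 0; omega⟩
  | succ q ih =>
    obtain ⟨i, h1, h2⟩ := ih
    by_cases h : q + 1 < cut A m n (i + 1)
    · exact ⟨i, by omega, h⟩
    · exact ⟨i + 1, by omega, by have := cut_lt H n (i + 1); omega⟩

lemma x_cut (H : Hyp A m) (n i : ℕ) : x A m n (cut A m n i) = A n := by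
  by_cases h : x A m (n + 1) i = A n
  · exact (cut_self H h).2
  · exact (cut_ne H h).2.1 0 (H.pos n)

lemma cut_of_ne (H : Hyp A m) {n q : ℕ} (h : x A m n q ≠ A n) :
    ∃ i, q + 1 = cut A m n (i + 1) ∧ x A m (n + 1) i = x A m n q ∧ q = cut A m n i + m n := by
  obtain ⟨i, h1, h2⟩ := exists_cut H n q
  by_cases h' : x A m (n + 1) i = A n
  · have := (cut_self H h').1
    have e : q = cut A m n i := by omega
    exact absurd (e ▸ x_cut H n i) h
  · obtain ⟨g1, g2, g3⟩ := cut_ne H h'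
    by_cases hq : q < cut A m n i + m n
    · have := g2 (q - cut A m n i) (by omega)
      rw [show cut A m n i + (q - cut A m n i) = q by omega] at this
      exact absurd this h
    · have e : q = cut A m n i + m n := by omega
      exact ⟨i, by omega, by rw [← g3, e], e⟩

lemma x_zero (H : Hyp A m) (n : ℕ) : x A m n 0 = A n := by
  have := x_cut H n 0
  rwa [cut_zero] at this

lemma x_succ_ne (H : Hyp A m) {n i : ℕ} (h : x A m (n + 1) i = A n) :
    x A m (n + 1) (i + 1) ≠ A n := by
  obtain ⟨j, hj, -⟩ := cut_of_ne (n := n + 1) (q := i) H (by rw [h]; exact H.ne n)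
  rw [hj, x_cut H]; exact (H.ne n).symm

/-- From every cut point the word of level `n` reads `A^m b`, where `b` is the corresponding
letter of level `n+1`. For `b = A` this uses that the next letter of level `n+1` is not `A`. -/
lemma x_cut_add (H : Hyp A m) (n i : ℕ) :
    (∀ t < m n, x A m n (cut A m n i + t) = A n) ∧
      x A m n (cut A m n i + m n) = x A m (n + 1) i := by
  by_cases h : x A m (n + 1) i = A n
  · obtain ⟨h1, h2⟩ := cut_self H h
    obtain ⟨g1, g2, g3⟩ := cut_ne H (x_succ_ne H h)
    have key : ∀ t ≤ m n, x A m n (cut A m n i + t) = A n := by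
      intro t ht
      rcases t with _ | t
      · exact h2
      · have := g2 t (by omega)
        rwa [h1, show cut A m n i + 1 + t = cut A m n i + (t + 1) by omega] at this
    exact ⟨fun t ht => key t ht.le, by rw [key _ le_rfl, h]⟩
  · exact (cut_ne H h).2

/-- A position that is not a cut point lies strictly inside a block `A^m b` with `b ≠ A`. -/
lemma not_cut (H : Hyp A m) {n q : ℕ} (h : ∀ i, q ≠ cut A m n i) :
    1 ≤ q ∧ x A m n (q - 1) = A n ∧
      ∃ j < m n, (∀ u < j, x A m n (q + u) = A n) ∧ x A m n (q + j) ≠ A n := by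
  obtain ⟨i, h1, h2⟩ := exists_cut H n q
  have h3 := h i
  by_cases h' : x A m (n + 1) i = A n
  · have := (cut_self H h').1; omega
  · obtain ⟨g1, g2, g3⟩ := cut_ne H h'
    refine ⟨by omega, ?_, m n - (q - cut A m n i), by omega, fun u hu => ?_, ?_⟩
    · have := g2 (q - 1 - cut A m n i) (by omega)
      rwa [show cut A m n i + (q - 1 - cut A m n i) = q - 1 by omega] at this
    · have := g2 (q + u - cut A m n i) (by omega)
      rwa [show cut A m n i + (q + u - cut A m n i) = q + u by omega] at this
    · rw [show q + (m n - (q - cut A m n i)) = cut A m n i + m n by omega, g3]; exact h'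

end Words

/-! ### Runs and their descent through the levels -/

/-- `CC A m n i` is the length of the image in the word of level `0` of the prefix of length `i`
of the word of level `n`. -/
noncomputable def CC (A : ℕ → α) (m : ℕ → ℕ) : ℕ → ℕ → ℕ
  | 0, i => i
  | n + 1, i => CC A m n (cut A m n i)

/-- The length of the image in level `0` of the letter `b` of level `n`. -/
noncomputable def ta (A : ℕ → α) (m : ℕ → ℕ) (n : ℕ) (b : α) : ℕ := (Ph A m n [b]).length

/-- The length of `s_{n-1}^{m_{n-1}} ⋯ s_0^{m_0}`, the common continuation after any cut point of
level `n`, where `s_j = Ph A m j [A j]`. -/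
noncomputable def PP (A : ℕ → α) (m : ℕ → ℕ) : ℕ → ℕ
  | 0 => 0
  | n + 1 => PP A m n + m n * ta A m n (A n)

/-- A left-maximal run: the factors of length `l` at `q` and `q + p` of the word of level `n`
agree, and cannot be extended to the left. -/
def Run (A : ℕ → α) (m : ℕ → ℕ) (n q p l : ℕ) : Prop :=
  1 ≤ p ∧ (q = 0 ∨ x A m n (q - 1) ≠ x A m n (q + p - 1)) ∧
    ∀ t < l, x A m n (q + t) = x A m n (q + p + t)

/-- A run that does not come from level `n + 1`: the common factor is a power of `A n` of length
at most `j < m n`, where exactly `j` letters `A n` follow one of the positions `q`, `q + p`. The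
first case covers the runs for which `q` is not a cut point; in the second, `q` is a cut point and
`q + p` is not. -/
def Exc (A : ℕ → α) (m : ℕ → ℕ) (n q p l : ℕ) : Prop :=
  ∃ j < m n, l ≤ j ∧
    (((∀ u < j, x A m n (q + u) = A n) ∧ x A m n (q + j) ≠ A n ∧ x A m n (q + p - 1) ≠ A n) ∨
     ((∀ u < j, x A m n (q + p + u) = A n) ∧ x A m n (q + p + j) ≠ A n ∧
        x A m n (q + p - 1) = A n ∧ ∃ i, q = cut A m n i))

section Descent

variable {A : ℕ → α} {m : ℕ → ℕ}

/-- A common factor at two cut points is covered by the image of a common factor of level `n+1`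
followed by `A^m`. -/
lemma agree_pull (H : Hyp A m) (n l : ℕ) : ∀ i i',
    (∀ t < l, x A m n (cut A m n i + t) = x A m n (cut A m n i' + t)) →
    ∃ l', (∀ t < l', x A m (n + 1) (i + t) = x A m (n + 1) (i' + t)) ∧
      cut A m n i + l ≤ cut A m n (i + l') + m n := by
  induction l using Nat.strong_induction_on with
  | _ l ih =>
  intro i i' h
  by_cases hl : l ≤ m n
  · exact ⟨0, by simp, by simpa using hl⟩
  · have e : x A m (n + 1) i = x A m (n + 1) i' := by
      rw [← (x_cut_add H n i).2, ← (x_cut_add H n i').2]; exact h _ (by omega)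
    have h1 := (cut_block H n i).2
    have h2 := (cut_block H n i').2
    rw [← e] at h2
    have h3 := cut_lt H n i
    have h4 : cut A m n (i + 1) ≤ cut A m n i + m n + 1 := by
      by_cases h' : x A m (n + 1) i = A n
      · have := (cut_self H h').1; omega
      · have := (cut_ne H h').1; omega
    set b := (ph (A n) (m n) [x A m (n + 1) i]).length
    obtain ⟨l', g1, g2⟩ := ih (l - b) (by omega) (i + 1) (i' + 1) (fun t ht => by
      have := h (b + t) (by omega)
      rw [h1, h2]
      simpa [Nat.add_assoc] using this)
    refine ⟨l' + 1, fun t ht => ?_, ?_⟩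
    · rcases t with _ | t
      · exact e
      · have := g1 t (by omega)
        rwa [show i + (t + 1) = i + 1 + t by omega, show i' + (t + 1) = i' + 1 + t by omega]
    · rw [show i + (l' + 1) = i + 1 + l' by omega]; omega

/-- A common factor of level `n+1` gives a common factor of level `n`, longer than its image by
`A^m`. -/
lemma agree_push (H : Hyp A m) (n l : ℕ) : ∀ i i',
    (∀ t < l, x A m (n + 1) (i + t) = x A m (n + 1) (i' + t)) →
    ∀ t, cut A m n i + t < cut A m n (i + l) + m n →
      x A m n (cut A m n i + t) = x A m n (cut A m n i' + t) := by
  induction l with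
  | zero =>
    intro i i' _ t ht
    rw [(x_cut_add H n i).1 t (by simpa using ht), (x_cut_add H n i').1 t (by simpa using ht)]
  | succ l ih =>
    intro i i' h t ht
    have e : x A m (n + 1) i = x A m (n + 1) i' := h 0 (by omega)
    by_cases hm : t < m n
    · rw [(x_cut_add H n i).1 t hm, (x_cut_add H n i').1 t hm]
    by_cases hm' : t = m n
    · rw [hm', (x_cut_add H n i).2, (x_cut_add H n i').2, e]
    have h1 := (cut_block H n i).2
    have h2 := (cut_block H n i').2
    rw [← e] at h2
    have h4 : cut A m n (i + 1) ≤ cut A m n i + m n + 1 := by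
      by_cases h' : x A m (n + 1) i = A n
      · have := (cut_self H h').1; omega
      · have := (cut_ne H h').1; omega
    set b := (ph (A n) (m n) [x A m (n + 1) i]).length
    have := ih (i + 1) (i' + 1) (fun t ht => by
      have := h (t + 1) (by omega)
      rwa [show i + (t + 1) = i + 1 + t by omega, show i' + (t + 1) = i' + 1 + t by omega] at this)
      (t - b) (by rw [show i + 1 + l = i + (l + 1) by omega]; omega)
    rw [h1, h2] at this
    rwa [show cut A m n i + b + (t - b) = cut A m n i + t by omega,
      show cut A m n i' + b + (t - b) = cut A m n i' + t by omega] at this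

lemma x_cut_pred (H : Hyp A m) (n i : ℕ) :
    x A m n (cut A m n (i + 1) - 1) = x A m (n + 1) i := by
  by_cases h : x A m (n + 1) i = A n
  · obtain ⟨h1, h2⟩ := cut_self H h
    rw [h1, h, Nat.add_sub_cancel, h2]
  · obtain ⟨h1, -, h3⟩ := cut_ne H h
    rw [h1, Nat.add_sub_cancel, h3]

/-- A run either comes from a run of the next level or is exceptional. -/
lemma run_descent (H : Hyp A m) {n q p l : ℕ} (h : Run A m n q p l) :
    (∃ q' p' l', Run A m (n + 1) q' p' l' ∧ q = cut A m n q' ∧ q + p = cut A m n (q' + p') ∧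
      q + l ≤ cut A m n (q' + l') + m n) ∨ Exc A m n q p l := by
  obtain ⟨hp, hleft, hag⟩ := h
  by_cases hq : ∃ i, q = cut A m n i
  · by_cases hqp : ∃ i, q + p = cut A m n i
    · left
      obtain ⟨i, hi⟩ := hq
      obtain ⟨i', hi'⟩ := hqp
      have hlt : i < i' := (cut_strictMono H n).lt_iff_lt.mp (by omega)
      obtain ⟨l', g1, g2⟩ := agree_pull H n l i i' (by rw [← hi, ← hi']; exact hag)
      refine ⟨i, i' - i, l', ⟨by omega, ?_, ?_⟩, hi, ?_, by rw [hi]; exact g2⟩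
      · rcases i with _ | i
        · left; rfl
        · right
          obtain ⟨j, rfl⟩ : ∃ j, i' = j + 1 := ⟨i' - 1, by omega⟩
          have := cut_lt H n i
          rcases hleft with h0 | h0
          · omega
          · rw [hi', hi, x_cut_pred H, x_cut_pred H] at h0
            rwa [show i + 1 + (j + 1 - (i + 1)) - 1 = j by omega, Nat.add_sub_cancel]
      · intro t ht
        rw [g1 t ht, show i + (i' - i) = i' by omega]
      · rw [show i + (i' - i) = i' by omega, hi']
    · right
      push Not at hqp
      obtain ⟨-, h2, j, hj, h3, h4⟩ := not_cut H hqp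
      refine ⟨j, hj, ?_, Or.inr ⟨h3, h4, h2, hq⟩⟩
      by_contra hlj
      obtain ⟨i, hi⟩ := hq
      have := hag j (by omega)
      rw [hi, (x_cut_add H n i).1 j hj, ← hi] at this
      exact h4 this.symm
  · right
    push Not at hq
    obtain ⟨h1, h2, j, hj, h3, h4⟩ := not_cut H hq
    rcases hleft with h0 | h0
    · omega
    have h5 : x A m n (q + p - 1) ≠ A n := by rw [← h2]; exact h0.symm
    refine ⟨j, hj, ?_, Or.inl ⟨h3, h4, h5⟩⟩
    by_contra hlj
    obtain ⟨i, hi, -⟩ := cut_of_ne H h5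
    have := hag j (by omega)
    rw [show q + p = cut A m n (i + 1) by omega, (x_cut_add H n (i + 1)).1 j hj] at this
    exact h4 this

lemma Ph_seg (H : Hyp A m) (n i : ℕ) :
    Ph A m n (seg (x A m n) 0 i) = seg (x A m 0) 0 (CC A m n i) := by
  induction n generalizing i with
  | zero => rfl
  | succ n ih => rw [Ph, ph_seg H, ih]; rfl

lemma CC_mono (H : Hyp A m) (n : ℕ) : StrictMono (CC A m n) := by
  induction n with
  | zero => exact strictMono_id
  | succ n ih => exact ih.comp (cut_strictMono H n)

/-- The image of a factor of level `n` is a factor of level `0`. -/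
lemma Ph_seg_add (H : Hyp A m) (n q l : ℕ) :
    CC A m n (q + l) = CC A m n q + (Ph A m n (seg (x A m n) q l)).length ∧
      seg (x A m 0) (CC A m n q) (Ph A m n (seg (x A m n) q l)).length =
        Ph A m n (seg (x A m n) q l) := by
  have h1 := Ph_seg H n (q + l)
  rw [seg_add, Ph_append, Ph_seg H, Nat.zero_add] at h1
  have h2 := congrArg List.length h1
  simp only [List.length_append, seg_length] at h2
  refine ⟨h2.symm, ?_⟩
  rw [← h2, seg_add, Nat.zero_add] at h1
  exact (List.append_cancel_left h1).symm

lemma CC_succ (H : Hyp A m) (n q : ℕ) :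
    CC A m n (q + 1) = CC A m n q + ta A m n (x A m n q) := by
  rw [(Ph_seg_add H n q 1).1]; simp [seg, ta]

lemma CC_power (H : Hyp A m) (n q r : ℕ) (h : ∀ t < r, x A m n (q + t) = A n) :
    CC A m n (q + r) = CC A m n q + r * ta A m n (A n) := by
  induction r with
  | zero => simp
  | succ r ih =>
    rw [← Nat.add_assoc, CC_succ H, ih (fun t ht => h t (by omega)), h r (by omega)]; ring

/-- Every run of level `0` comes from a run of level `n`, or from an exceptional run of a level
below `n`. -/
lemma run_descent_iter (H : Hyp A m) {q p l : ℕ} (h : Run A m 0 q p l) (n : ℕ) :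
    (∃ q' p' l', Run A m n q' p' l' ∧ q = CC A m n q' ∧ q + p = CC A m n (q' + p') ∧
      q + l ≤ CC A m n (q' + l') + PP A m n) ∨
    ∃ n' < n, ∃ q' p' l', 1 ≤ p' ∧ Exc A m n' q' p' l' ∧ q = CC A m n' q' ∧
      q + p = CC A m n' (q' + p') ∧ q + l ≤ CC A m n' (q' + l') + PP A m n' := by
  induction n with
  | zero => exact Or.inl ⟨q, p, l, h, rfl, rfl, by simp [CC, PP]⟩
  | succ n ih =>
    rcases ih with ⟨q', p', l', h1, h2, h3, h4⟩ | ⟨n', hn', h'⟩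
    · rcases run_descent H h1 with ⟨q2, p2, l2, g1, g2, g3, g4⟩ | g
      · left
        refine ⟨q2, p2, l2, g1, by rw [h2, g2]; rfl, by rw [h3, g3]; rfl, h4.trans ?_⟩
        have := (CC_mono H n).monotone g4
        rw [CC_power H n _ _ (x_cut_add H n _).1] at this
        simp only [CC, PP]; omega
      · right; exact ⟨n, by omega, q', p', l', h1.1, g, h2, h3, h4⟩
    · right; exact ⟨n', by omega, h'⟩

/-- A common factor at two positions of level `n` lifts to level `0`, with a gain of `PP A m n`
on the right. -/
lemma agree_lift (H : Hyp A m) (n : ℕ) : ∀ l i i',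
    (∀ t < l, x A m n (i + t) = x A m n (i' + t)) →
    ∀ t, CC A m n i + t < CC A m n (i + l) + PP A m n →
      x A m 0 (CC A m n i + t) = x A m 0 (CC A m n i' + t) := by
  induction n with
  | zero =>
    intro l i i' h t ht
    simp only [CC, PP] at ht ⊢
    exact h t (by omega)
  | succ n ih =>
    intro l i i' h t ht
    have h0 : cut A m n i ≤ cut A m n (i + l) := (cut_strictMono H n).monotone (by omega)
    refine ih (cut A m n (i + l) + m n - cut A m n i) _ _ (fun t ht =>
      agree_push H n l i i' h t (by omega)) t ?_
    rw [show cut A m n i + (cut A m n (i + l) + m n - cut A m n i) = cut A m n (i + l) + m n by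
      omega, CC_power H n _ _ (x_cut_add H n _).1]
    simp only [CC, PP] at ht
    omega

end Descent

/-! ### Lengths of the images of letters -/

/-- The directive sequence runs cyclically through `k` distinct letters. -/
structure Cyc (A : ℕ → α) (m : ℕ → ℕ) (k : ℕ) : Prop extends Hyp A m where
  two : 2 ≤ k
  per : ∀ n, A (n + k) = A n
  inj : ∀ n g, 1 ≤ g → g < k → A (n + g) ≠ A n

/-- The length of the image of the letter `A (n+g)` of level `n`; for `1 ≤ g < k ≤ n + g` this
letter was last used as a directive letter at index `n + g - k`. -/
noncomputable def U (A : ℕ → α) (m : ℕ → ℕ) (n g : ℕ) : ℕ := ta A m n (A (n + g))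

section Lengths

variable {A : ℕ → α} {m : ℕ → ℕ} {k : ℕ}

lemma U_succ (H : Cyc A m k) (n g : ℕ) (hg : g + 1 < k) :
    U A m (n + 1) g = m n * U A m n 0 + U A m n (g + 1) := by
  have h := H.inj n (g + 1) (by omega) hg
  rw [U, ta, show n + 1 + g = n + (g + 1) by omega, Ph_succ_ne _ _ _ h, List.length_append,
    pw_length]
  rfl

lemma U_last (H : Cyc A m k) (n : ℕ) : U A m (n + 1) (k - 1) = U A m n 0 := by
  have := H.two
  rw [U, ta, show n + 1 + (k - 1) = n + k by omega, H.per, Ph_succ_self]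
  rfl

lemma PP_succ (n : ℕ) : PP A m (n + 1) = PP A m n + m n * U A m n 0 := rfl

lemma U_zero (g : ℕ) : U A m 0 g = 1 := by simp [U, ta, Ph]

lemma U_fresh (H : Cyc A m k) (n : ℕ) : ∀ g, n + g < k → U A m n g = PP A m n + 1 := by
  induction n with
  | zero => intro g _; simp [U_zero, PP]
  | succ n ih =>
    intro g hg
    rw [U_succ H n g (by omega), PP_succ, ih (g + 1) (by omega)]; ring

lemma U_pos (H : Cyc A m k) (n : ℕ) : ∀ g < k, 1 ≤ U A m n g := by
  induction n with
  | zero => intro g _; simp [U_zero]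
  | succ n ih =>
    intro g hg
    by_cases h : g + 1 < k
    · rw [U_succ H n g h]; have := ih _ h; omega
    · rw [show g = k - 1 by omega, U_last H]; exact ih 0 (by omega)

lemma le_mul_U (H : Cyc A m k) (n : ℕ) : U A m n 0 ≤ m n * U A m n 0 :=
  Nat.le_mul_of_pos_left _ (H.pos n)

lemma U_le_PP (H : Cyc A m k) (n : ℕ) : ∀ g < k, k ≤ n + g → U A m n g ≤ PP A m n := by
  induction n with
  | zero => intro g _ _; omega
  | succ n ih =>
    intro g hg hk
    by_cases h : g + 1 < k
    · rw [U_succ H n g h, PP_succ]; have := ih _ h (by omega); omega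
    · rw [show g = k - 1 by omega, U_last H, PP_succ]
      have := le_mul_U H n; omega

lemma U_step (H : Cyc A m k) (n : ℕ) : ∀ g, g + 1 < k →
    U A m n (g + 1) ≤ U A m n g ∧ (k ≤ n + (g + 1) → U A m n (g + 1) < U A m n g) := by
  induction n with
  | zero => intro g hg; simp only [U_zero]; omega
  | succ n ih =>
    intro g hg
    rw [U_succ H n g hg]
    by_cases h : g + 2 < k
    · rw [U_succ H n (g + 1) h]
      have := ih (g + 1) h
      rw [show g + 1 + 1 = g + 2 by omega] at *
      omega
    · rw [show g + 1 = k - 1 by omega, U_last H]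
      have h1 := U_pos H n (k - 1) (by omega)
      have h2 := le_mul_U H n
      omega

lemma U_anti (H : Cyc A m k) (n g g' : ℕ) (h : g ≤ g') (h' : g' < k) :
    U A m n g' ≤ U A m n g := by
  induction g', h using Nat.le_induction with
  | base => exact le_rfl
  | succ g' hg ih => exact ((U_step H n g' h').1).trans (ih (by omega))

lemma U_strict (H : Cyc A m k) (n g g' : ℕ) (h : g < g') (h' : g' < k) (hk : k ≤ n + g') :
    U A m n g' < U A m n g := by
  obtain ⟨e, rfl⟩ : ∃ e, g' = e + 1 := ⟨g' - 1, by omega⟩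
  exact ((U_step H n e h').2 hk).trans_le (U_anti H n g e (by omega) (by omega))

lemma U_ge (H : Cyc A m k) (n g : ℕ) (hg : g < k) : U A m n 0 ≤ U A m (n + 1) g := by
  rw [← U_last H n]
  exact U_anti H (n + 1) g (k - 1) (by omega) (by omega)

/-- The recurrence for the lengths `U A m n 0` of the words `s_n`. -/
lemma sig_succ (H : Cyc A m k) (n : ℕ) :
    U A m (n + 1) 0 = m n * U A m n 0 + U A m n 1 := U_succ H n 0 H.two

lemma sig_lt (H : Cyc A m k) (n : ℕ) :
    m n * U A m n 0 < U A m (n + 1) 0 := by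
  have := U_pos H n 1 H.two
  rw [sig_succ H]; omega

lemma sig_strictMono (H : Cyc A m k) : StrictMono (fun n => U A m n 0) :=
  strictMono_nat_of_lt_succ fun n => (le_mul_U H n).trans_lt (sig_lt H n)

lemma PP_lt (H : Cyc A m k) (n : ℕ) : ∀ g < k, PP A m n < U A m n 0 + U A m n g := by
  have := H.two
  induction n with
  | zero => intro g _; simp [U_zero, PP]
  | succ n ih =>
    intro g hg
    have h1 := ih 1 (by omega)
    have h2 := U_ge H n g hg
    rw [PP_succ, sig_succ H]
    omega

/-- The lengths of the words `Ph n (A_n^j A_{n+g})` with `j < m n` and `1 ≤ g < k ≤ n + g` are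
pairwise distinct; this is the case `n ≤ n'`. -/
lemma len_unique_aux (H : Cyc A m k) {n j g n' j' g' : ℕ} (hn : n ≤ n')
    (hg : g < k) (hng : k ≤ n + g) (hg1 : 1 ≤ g) (hj : j < m n)
    (hg' : g' < k) (hng' : k ≤ n' + g')
    (h : j * U A m n 0 + U A m n g = j' * U A m n' 0 + U A m n' g') (hg1' : 1 ≤ g') :
    n = n' ∧ j = j' ∧ g = g' := by
  have s1 := U_strict H n 0 g hg1 hg hng
  have s1' := U_strict H n' 0 g' hg1' hg' hng'
  have hjm : (j + 1) * U A m n 0 ≤ m n * U A m n 0 := Nat.mul_le_mul_right _ hj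
  rw [Nat.succ_mul] at hjm
  have hlt := sig_lt H n
  rcases Nat.lt_or_ge n n' with hlt' | hge
  · exfalso
    obtain ⟨e, rfl⟩ : ∃ e, n' = e + 1 := ⟨n' - 1, by omega⟩
    have b1 := U_ge H e g' hg'
    rcases Nat.lt_or_ge n e with h2 | h2
    · have := (sig_strictMono H).monotone (show n + 1 ≤ e by omega)
      omega
    · obtain rfl : n = e := by omega
      rcases j' with _ | j'
      · by_cases hl : g' + 1 < k
        · rw [U_succ H n g' hl] at h
          omega
        · rw [show g' = k - 1 by omega, U_last H] at h
          rcases j with _ | j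
          · omega
          · have := U_pos H n g hg
            rw [Nat.succ_mul] at h
            omega
      · rw [Nat.succ_mul] at h; omega
  · obtain rfl : n = n' := by omega
    have hjj : j = j' := by
      rcases Nat.lt_trichotomy j j' with h3 | h3 | h3
      · have := Nat.mul_le_mul_right (U A m n 0) (show j + 1 ≤ j' from h3)
        rw [Nat.succ_mul] at this; omega
      · exact h3
      · have := Nat.mul_le_mul_right (U A m n 0) (show j' + 1 ≤ j from h3)
        rw [Nat.succ_mul] at this; omega
    subst hjj
    refine ⟨rfl, rfl, ?_⟩
    rcases Nat.lt_trichotomy g g' with h3 | h3 | h3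
    · have := U_strict H n g g' h3 hg' hng'; omega
    · exact h3
    · have := U_strict H n g' g h3 hg hng; omega

lemma len_unique (H : Cyc A m k) {n j g n' j' g' : ℕ}
    (hg : g < k) (hng : k ≤ n + g) (hg1 : 1 ≤ g) (hj : j < m n)
    (hg' : g' < k) (hng' : k ≤ n' + g') (hg1' : 1 ≤ g') (hj' : j' < m n')
    (h : j * U A m n 0 + U A m n g = j' * U A m n' 0 + U A m n' g') :
    n = n' ∧ j = j' ∧ g = g' := by
  rcases le_total n n' with hn | hn
  · exact len_unique_aux H hn hg hng hg1 hj hg' hng' h hg1'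
  · obtain ⟨h1, h2, h3⟩ := len_unique_aux H hn hg' hng' hg1' hj' hg hng h.symm hg1
    exact ⟨h1.symm, h2.symm, h3.symm⟩

/-- The periods of the theorem differ from the periods of powers of an `s_{n'}`. -/
lemma len_ne_power (H : Cyc A m k) {n r g n' p : ℕ}
    (hg : g < k) (hng : k ≤ n + g) (hg1 : 1 ≤ g) (hr1 : 1 ≤ r) (hr : r ≤ m n)
    (hrg : r = m n → g ≠ 1) (hp1 : 1 ≤ p) (hp : p ≤ m n' + 1) :
    r * U A m n 0 + U A m n g ≠ p * U A m n' 0 := by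
  intro h
  have s0 := U_pos H n g hg
  have s1 := U_strict H n 0 g hg1 hg hng
  rcases Nat.lt_trichotomy n' n with hl | rfl | hl
  · obtain ⟨e, rfl⟩ : ∃ e, n = e + 1 := ⟨n - 1, by omega⟩
    have a1 := U_ge H e g hg
    have a2 := (sig_strictMono H).monotone (show n' + 1 ≤ e + 1 by omega)
    have a3 := (sig_strictMono H).monotone (show n' ≤ e by omega)
    have a4 := sig_lt H n'
    have a5 := Nat.mul_le_mul_right (U A m n' 0) hp
    rw [Nat.succ_mul] at a5
    have a6 := Nat.mul_le_mul_right (U A m (e + 1) 0) hr1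
    omega
  · rcases Nat.lt_or_ge r p with h3 | h3
    · have := Nat.mul_le_mul_right (U A m n' 0) (show r + 1 ≤ p from h3)
      rw [Nat.succ_mul] at this; omega
    · have := Nat.mul_le_mul_right (U A m n' 0) h3
      omega
  · have a2 := (sig_strictMono H).monotone (show n + 1 ≤ n' from hl)
    rw [sig_succ H] at a2
    have a3 := Nat.mul_le_mul_right (U A m n' 0) hp1
    rcases Nat.lt_or_ge r (m n) with h3 | h3
    · have := Nat.mul_le_mul_right (U A m n 0) (show r + 1 ≤ m n from h3)
      rw [Nat.succ_mul] at this; omega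
    · obtain rfl : r = m n := by omega
      have := U_strict H n 1 g (by have := hrg rfl; omega) hg hng
      omega

lemma per_mul (H : Cyc A m k) (n c : ℕ) : A (n + k * c) = A n := by
  induction c with
  | zero => rfl
  | succ c ih => rw [Nat.mul_succ, ← Nat.add_assoc, H.per, ih]

lemma letter_shift (H : Cyc A m k) {n N : ℕ} (h : n ≤ N) : ∃ g < k, A N = A (n + g) := by
  have := H.two
  refine ⟨(N - n) % k, Nat.mod_lt _ (by omega), ?_⟩
  rw [← per_mul H (n + (N - n) % k) ((N - n) / k)]
  congr 1
  have := Nat.mod_add_div (N - n) k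
  omega

lemma x_letter (H : Hyp A m) (q : ℕ) : ∀ n, ∃ N, n ≤ N ∧ x A m n q = A N := by
  induction q using Nat.strong_induction_on with
  | _ q ih =>
  intro n
  by_cases h : x A m n q = A n
  · exact ⟨n, le_rfl, h⟩
  · obtain ⟨i, h1, h2, h3⟩ := cut_of_ne H h
    have := (cut_strictMono H n).le_apply (x := i)
    have := H.pos n
    obtain ⟨N, hN, e⟩ := ih i (by omega) (n + 1)
    exact ⟨N, by omega, by rw [← h2, e]⟩

lemma x_letter' (H : Cyc A m k) (n q : ℕ) : ∃ g < k, x A m n q = A (n + g) := by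
  obtain ⟨N, h, e⟩ := x_letter H.toHyp q n
  rw [e]; exact letter_shift H h

lemma letter_occurs (H : Hyp A m) (g : ℕ) : ∀ n, ∃ q, x A m n q = A (n + g) := by
  induction g with
  | zero => intro n; exact ⟨0, x_zero H n⟩
  | succ g ih =>
    intro n
    obtain ⟨i, hi⟩ := ih (n + 1)
    refine ⟨_, ((x_cut_add H n i).2.trans hi).trans ?_⟩
    congr 1; omega

end Lengths

/-! ### Classification of the squares -/

section Squares

variable {A : ℕ → α} {m : ℕ → ℕ} {k : ℕ}

/-- Every occurrence of a square extends to the left to a run. -/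
lemma extend_left (u : ℕ → α) (L Q : ℕ)
    (h : ∀ t < L, u (Q + t) = u (Q + L + t)) :
    ∃ q ≤ Q, (q = 0 ∨ u (q - 1) ≠ u (q + L - 1)) ∧
      ∀ t < Q - q + L, u (q + t) = u (q + L + t) := by
  induction Q with
  | zero => exact ⟨0, le_rfl, Or.inl rfl, by simpa using h⟩
  | succ Q ih =>
    by_cases e : u Q = u (Q + L)
    · have key : ∀ t < L + 1, u (Q + t) = u (Q + L + t) := by
        intro t ht
        rcases t with _ | t
        · exact e
        · have := h t (by omega)
          rwa [show Q + 1 + t = Q + (t + 1) by omega,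
            show Q + 1 + L + t = Q + L + (t + 1) by omega] at this
      obtain ⟨q, h1, h2, h3⟩ := ih (fun t ht => key t (by omega))
      refine ⟨q, by omega, h2, fun t ht => ?_⟩
      by_cases ht' : t < Q - q + L
      · exact h3 t ht'
      · have := key (t - (Q - q)) (by omega)
        rwa [show Q + (t - (Q - q)) = q + t by omega,
          show Q + L + (t - (Q - q)) = q + L + t by omega] at this
    · exact ⟨Q + 1, le_rfl, Or.inr (by simpa [Nat.add_right_comm] using e), by simpa using h⟩

/-- The word `Ph n (A_n^j A_{n+g})`; the words `v` of the theorem are of this form. -/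
noncomputable def V (A : ℕ → α) (m : ℕ → ℕ) (n j g : ℕ) : List α :=
  Ph A m n (List.replicate j (A n) ++ [A (n + g)])

lemma V_length (n j g : ℕ) : (V A m n j g).length = j * U A m n 0 + U A m n g := by
  rw [V, Ph_append, Ph_replicate, List.length_append, pw_length]; rfl

lemma seg_power_letter {n q j : ℕ} {b : α} (h : ∀ u < j, x A m n (q + u) = A n)
    (hb : x A m n (q + j) = b) :
    seg (x A m n) q (j + 1) = List.replicate j (A n) ++ [b] := by
  rw [seg_add]
  congr 1
  · apply List.ext_getElem (by simp)
    intro t h1 h2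
    simp only [seg_length] at h1
    simp [h t h1]
  · simp [seg, hb]

/-- The period `L` of a square either is a small multiple of some `|s_{n'}|`, or the square lies in a
run whose period word is some `V A m n' j g` with `j < m n'`, at a bounded distance from
the start of that run. -/
lemma classify (H : Cyc A m k) {L Q : ℕ} (hL : 1 ≤ L)
    (hag : ∀ t < L, x A m 0 (Q + t) = x A m 0 (Q + L + t)) :
    (∃ n' p', 1 ≤ p' ∧ p' ≤ m n' + 1 ∧ L = p' * U A m n' 0) ∨
    ∃ n' j g q, j < m n' ∧ 1 ≤ g ∧ g < k ∧ k ≤ n' + g ∧ L = j * U A m n' 0 + U A m n' g ∧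
      q ≤ Q ∧ Q - q ≤ PP A m n' - U A m n' g ∧
      seg (x A m 0) q L = V A m n' j g ∧
      ∀ t < Q - q + L, x A m 0 (q + t) = x A m 0 (q + L + t) := by
  have Hh := H.toHyp
  obtain ⟨q, hq, hleft, hrun⟩ := extend_left _ L Q hag
  rcases run_descent_iter Hh (q := q) (p := L) (l := Q - q + L) ⟨hL, hleft, hrun⟩ (L + 1) with
    ⟨q', p', l', hr, h1, h2, -⟩ | ⟨n, -, q', p', l', hp', ⟨j, hj, hlj, hexc⟩, h1, h2, h3⟩
  · -- the images of the letters of level `L + 1` are longer than `L`, because `U A m n 0` increases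
    -- strictly with `n`
    exfalso
    have a1 := (CC_mono Hh (L + 1)).monotone (show q' + 1 ≤ q' + p' by have := hr.1; omega)
    rw [CC_succ Hh] at a1
    obtain ⟨g, hg, e⟩ := x_letter' H (L + 1) q'
    rw [e] at a1
    have a2 := U_ge H L g hg
    have a3 := (sig_strictMono H).le_apply (x := L)
    have a4 : U A m L 0 ≠ L := by
      intro h
      have b1 := sig_lt H L
      have b2 := (sig_strictMono H).add_le_nat L 0
      simp [U_zero] at b2
      omega
    change _ + U A m (L + 1) g ≤ _ at a1
    omega
  · have hlj' := (CC_mono Hh n).monotone (show q' + l' ≤ q' + j by omega)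
    rcases hexc with ⟨e1, e2, e3⟩ | ⟨e1, e2, e3, i, hi⟩
    · right
      obtain ⟨g, hg, eg⟩ := x_letter' H n (q' + j)
      have hg1 : 1 ≤ g := by
        rcases g with _ | g
        · exact absurd eg e2
        · omega
      have hpj : j + 1 ≤ p' := by
        by_contra hcon
        have := e1 (p' - 1) (by omega)
        rw [show q' + (p' - 1) = q' + p' - 1 by omega] at this
        exact e3 this
      have hs : CC A m n (q' + j + 1) = CC A m n (q' + j) + U A m n g := by
        rw [CC_succ Hh, eg]; rfl
      have hPP := PP_lt H n g hg
      have hpe : p' = j + 1 := by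
        by_contra hcon
        obtain ⟨i, hi, -⟩ := cut_of_ne Hh e2
        have f1 : x A m n (q' + j + 1) = A n := by rw [hi, x_cut Hh]
        have f2 : p' ≠ j + 2 := by
          intro h
          apply e3
          rw [← f1]; congr 1; omega
        have f3 := (CC_mono Hh n).monotone (show q' + j + 1 + 1 ≤ q' + p' by omega)
        rw [CC_succ Hh n (q' + j + 1), f1, hs] at f3
        change _ + U A m n 0 ≤ _ at f3
        omega
      subst hpe
      have hpow := CC_power Hh n q' j e1
      change _ = _ + j * U A m n 0 at hpow
      rw [← Nat.add_assoc] at h2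
      have hkn : k ≤ n + g := by
        by_contra hcon
        have := U_fresh H n g (by omega)
        omega
      have hLe : L = j * U A m n 0 + U A m n g := by omega
      refine ⟨n, j, g, q, hj, hg1, hg, hkn, hLe, hq, by omega, ?_, hrun⟩
      have hseg := (Ph_seg_add Hh n q' (j + 1)).2
      rw [seg_power_letter e1 eg] at hseg
      have hl := V_length (A := A) (m := m) n j g
      rw [V] at hl
      rw [hl, ← hLe, ← h1] at hseg
      exact hseg
    · left
      obtain ⟨hA, hlast⟩ := x_cut_add Hh n i
      obtain ⟨i1, b1, b2, b3, b4⟩ : ∃ i1, m n ≤ i1 ∧ i1 ≤ m n + 1 ∧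
          (∀ t < i1, x A m n (q' + t) = A n) ∧ x A m n (q' + i1) ≠ A n := by
        rw [hi]
        by_cases hx : x A m (n + 1) i = A n
        · have hc := (cut_self Hh hx).1
          refine ⟨m n + 1, by omega, le_rfl, fun t ht => ?_, ?_⟩
          · by_cases ht' : t < m n
            · exact hA t ht'
            · rw [show t = m n by omega, hlast, hx]
          · have := (x_cut_add Hh n (i + 1)).2
            rw [show cut A m n i + (m n + 1) = cut A m n (i + 1) + m n by omega, this]
            exact x_succ_ne Hh hx
        · exact ⟨m n, le_rfl, by omega, hA, by rw [hlast]; exact hx⟩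
      have hp1 : p' ≤ i1 := by
        by_contra hcon
        have c1 : p' ≠ i1 + 1 := by
          rintro rfl
          exact b4 (by rw [← e3]; congr 1)
        obtain ⟨i2, hi2, -⟩ := cut_of_ne Hh b4
        have f1 : x A m n (q' + i1 + 1) = A n := by rw [hi2, x_cut Hh]
        obtain ⟨g, hg, eg⟩ := x_letter' H n (q' + i1)
        have f3 := (CC_mono Hh n).monotone (show q' + i1 + 1 + 1 ≤ q' + p' by omega)
        rw [CC_succ Hh n (q' + i1 + 1), f1, CC_succ Hh n (q' + i1), eg] at f3
        change _ + U A m n g + U A m n 0 ≤ _ at f3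
        have f4 := (CC_mono Hh n).monotone (show q' + j ≤ q' + i1 by omega)
        have hPP := PP_lt H n g hg
        omega
      refine ⟨n, p', hp', by omega, ?_⟩
      have := CC_power Hh n q' p' (fun t ht => b3 t (by omega))
      change _ = _ + p' * U A m n 0 at this
      omega

/-- The run with period word `V A m n r g` occurs. -/
lemma run_exists (H : Cyc A m k) {n r g : ℕ} (hg1 : 1 ≤ g) (hg : g < k) (hr : r ≤ m n) :
    ∃ Q, seg (x A m 0) Q (V A m n r g).length = V A m n r g ∧
      ∀ t < r * U A m n 0 + PP A m n,
        x A m 0 (Q + t) = x A m 0 (Q + (V A m n r g).length + t) := by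
  have Hh := H.toHyp
  obtain ⟨i0, hi0⟩ := letter_occurs Hh g n
  have hne : x A m n i0 ≠ A n := by rw [hi0]; exact H.inj n g hg1 hg
  obtain ⟨i, h1, h2, h3⟩ := cut_of_ne Hh hne
  have hA := (x_cut_add Hh n i).1
  have hA' := (x_cut_add Hh n (i + 1)).1
  have e1 : ∀ u < r, x A m n (i0 - r + u) = A n := by
    intro u hu
    have := hA (m n - r + u) (by omega)
    rwa [show cut A m n i + (m n - r + u) = i0 - r + u by omega] at this
  have e2 : x A m n (i0 - r + r) = A (n + g) := by rw [← hi0]; congr 1; omega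
  obtain ⟨c1, c2⟩ := Ph_seg_add Hh n (i0 - r) (r + 1)
  rw [seg_power_letter e1 e2] at c1 c2
  refine ⟨CC A m n (i0 - r), c2, fun t ht => ?_⟩
  have := agree_lift Hh n r (i0 - r) (i0 + 1) (fun u hu => by
    rw [e1 u hu, h1, hA' u (by omega)]) t (by
      rw [CC_power Hh n _ _ e1]
      change _ < _ + r * U A m n 0 + _
      omega)
  rw [this, show i0 + 1 = i0 - r + (r + 1) by omega, c1]
  rfl

/-- Along a run, the factors of length the period are the conjugates of the period word. -/
lemma seg_conj {u : ℕ → α} {Q p t : ℕ} (ht : t ≤ p)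
    (h : ∀ s < t, u (Q + s) = u (Q + p + s)) :
    seg u (Q + t) p = (seg u Q p).drop t ++ (seg u Q p).take t := by
  obtain ⟨e, rfl⟩ : ∃ e, p = t + e := ⟨p - t, by omega⟩
  have h1 : seg u Q (t + e) = seg u Q t ++ seg u (Q + t) e := seg_add ..
  rw [h1, List.drop_left' (by simp), List.take_left' (by simp), Nat.add_comm t e, seg_add,
    (seg_eq_iff u Q (Q + (t + e)) t).mpr h, Nat.add_assoc]

end Squares

/-! ### Primitivity -/

/-- Commuting words are powers of a common word; only the letter counts are recorded. -/
lemma comm_counts [DecidableEq α] (N : ℕ) : ∀ u v : List α, u.length + v.length ≤ N → u ≠ [] →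
    v ≠ [] → u ++ v = v ++ u → ∃ (i j l : ℕ) (f : α → ℕ), 1 ≤ i ∧ 1 ≤ j ∧ u.length = i * l ∧
      v.length = j * l ∧ (∀ b, u.count b = i * f b) ∧ ∀ b, v.count b = j * f b := by
  induction N with
  | zero =>
    intro u v h hu
    have := List.length_pos_of_ne_nil hu
    omega
  | succ N ih =>
    intro u v h hu hv huv
    have lu := List.length_pos_of_ne_nil hu
    have lv := List.length_pos_of_ne_nil hv
    rcases Nat.lt_trichotomy u.length v.length with hl | hl | hl
    · obtain ⟨v', rfl⟩ := List.prefix_of_prefix_length_le ⟨v, rfl⟩ ⟨u, huv.symm⟩ hl.le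
      rw [List.append_assoc] at huv
      obtain ⟨i, j, l, f, h1, h2, h3, h4, h5, h6⟩ := ih u v' (by simp at h; omega) hu
        (by rintro rfl; simp at hl) (List.append_cancel_left huv)
      exact ⟨i, i + j, l, f, h1, by omega, h3, by simp [h3, h4]; ring, h5,
        fun b => by simp [h5, h6]; ring⟩
    · obtain ⟨rfl, -⟩ := List.append_inj huv hl
      exact ⟨1, 1, u.length, fun b => u.count b, by simp⟩
    · obtain ⟨u', rfl⟩ := List.prefix_of_prefix_length_le ⟨u, rfl⟩ ⟨v, huv⟩ hl.le
      rw [List.append_assoc] at huv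
      obtain ⟨i, j, l, f, h1, h2, h3, h4, h5, h6⟩ := ih u' v (by simp at h; omega)
        (by rintro rfl; simp at hl) hv (List.append_cancel_left huv)
      exact ⟨i + j, j, l, f, by omega, h2, by simp [h3, h4]; ring, h4,
        fun b => by simp [h5, h6]; ring, h6⟩

/-- A common divisor of the length and all the letter counts of the image of `w` under `ph`
divides those of `w`. -/
lemma ph_dvd [DecidableEq α] (A : α) (m t : ℕ) (w : List α) (hl : t ∣ (ph A m w).length)
    (hc : ∀ b, t ∣ (ph A m w).count b) : t ∣ w.length ∧ ∀ b, t ∣ w.count b := by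
  have key : (∀ b ≠ A, (ph A m w).count b = w.count b) ∧
      (ph A m w).length + w.count A = (ph A m w).count A + w.length ∧
      (ph A m w).length + m * w.count A = (m + 1) * w.length := by
    clear hl hc
    induction w with
    | nil => simp [ph]
    | cons a w ih =>
      obtain ⟨i1, i2, i3⟩ := ih
      rw [ph_cons]
      by_cases h : a = A
      · subst h
        rw [ph_self]
        refine ⟨fun b hb => ?_, ?_, ?_⟩
        · simp [i1 b hb, List.count_cons]
        · simp; omega
        · simp; linarith
      · rw [ph_ne _ _ h]
        refine ⟨fun b hb => ?_, ?_, ?_⟩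
        · simp [i1 b hb, List.count_cons, List.count_replicate, Ne.symm hb]
        · simp [h]; omega
        · simp [h]; linarith
  obtain ⟨k1, k2, k3⟩ := key
  obtain ⟨X, hX⟩ : ∃ X, w.length = w.count A + X :=
    ⟨w.length - w.count A, by have := List.count_le_length (a := A) (l := w); omega⟩
  have e1 : (ph A m w).length = (ph A m w).count A + X := by omega
  have tX : t ∣ X := (Nat.dvd_add_right (hc A)).mp (e1 ▸ hl)
  have e2 : (ph A m w).length = w.length + m * X := by
    rw [hX] at k3 ⊢; linarith
  have tl : t ∣ w.length := (Nat.dvd_add_left (tX.mul_left m)).mp (e2 ▸ hl)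
  refine ⟨tl, fun b => ?_⟩
  by_cases hb : b = A
  · subst hb; exact (Nat.dvd_add_left tX).mp (hX ▸ tl)
  · rw [← k1 b hb]; exact hc b

lemma Ph_dvd [DecidableEq α] (A : ℕ → α) (m : ℕ → ℕ) (n t : ℕ) : ∀ w : List α,
    t ∣ (Ph A m n w).length → (∀ b, t ∣ (Ph A m n w).count b) →
    t ∣ w.length ∧ ∀ b, t ∣ w.count b := by
  induction n with
  | zero => intro w h1 h2; exact ⟨h1, h2⟩
  | succ n ih =>
    intro w h1 h2
    obtain ⟨g1, g2⟩ := ih _ h1 h2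
    exact ph_dvd _ _ _ _ g1 g2

section Final

variable {A : ℕ → α} {m : ℕ → ℕ} {k : ℕ}

/-- The word `V A m n r g` is primitive: its conjugates are pairwise distinct. -/
lemma V_rotate_inj (H : Cyc A m k) {n r g : ℕ} (hg1 : 1 ≤ g) (hg : g < k) {j j' : ℕ}
    (hj : j < j') (hj' : j' < (V A m n r g).length) :
    (V A m n r g).rotate j ≠ (V A m n r g).rotate j' := by
  classical
  intro h
  set v := V A m n r g with hv
  set w := v.rotate j with hw
  have hwl : w.length = v.length := by simp [hw]
  have h1 : w = w.rotate (j' - j) := by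
    rw [hw, List.rotate_rotate, show j + (j' - j) = j' by omega, ← h, hw]
  rw [List.rotate_eq_drop_append_take (by omega)] at h1
  have h2 : w.take (j' - j) ++ w.drop (j' - j) = w.drop (j' - j) ++ w.take (j' - j) := by
    rw [← h1, List.take_append_drop]
  obtain ⟨a, b, l, f, a1, b1, e1, e2, e3, e4⟩ := comm_counts _ _ _ le_rfl
    (List.ne_nil_of_length_pos (by rw [List.length_take]; omega))
    (List.ne_nil_of_length_pos (by rw [List.length_drop]; omega)) h2
  have d1 : a + b ∣ v.length := by
    rw [← hwl, ← List.take_append_drop (j' - j) w, List.length_append, e1, e2, ← Nat.add_mul]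
    exact Nat.dvd_mul_right _ _
  have d2 : ∀ c, a + b ∣ v.count c := by
    intro c
    rw [← (List.rotate_perm v j).count_eq c, ← hw, ← List.take_append_drop (j' - j) w,
      List.count_append, e3, e4, ← Nat.add_mul]
    exact Nat.dvd_mul_right _ _
  -- the letter `A (n+g)` has a single occurrence in the preimage of `v`
  have := (Ph_dvd A m n (a + b) _ d1 d2).2 (A (n + g))
  rw [List.count_append, List.count_replicate,
    if_neg (by simpa using (H.inj n g hg1 hg).symm)] at this
  simp at this
  omega

/-- The condition `r = m n → g ≠ 1` is needed: by `sig_succ`, the length for `r = m n`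
and `g = 1` is that of the word `s_{n+1}`. -/
lemma squares_eq (H : Cyc A m k) {n r g : ℕ} (hg1 : 1 ≤ g) (hg : g < k) (hng : k ≤ n + g)
    (hr1 : 1 ≤ r) (hr : r ≤ m n) (hrg : r = m n → g ≠ 1) (w : List α) :
    (w.length = (V A m n r g).length ∧ ∃ Q, w ++ w = seg (x A m 0) Q (w ++ w).length) ↔
      ∃ j ≤ PP A m n - U A m n g, w = (V A m n r g).drop j ++ (V A m n r g).take j := by
  have hlen := V_length (A := A) (m := m) n r g
  have hU := U_pos H n g hg
  have hP := PP_lt H n g hg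
  have hUP := U_le_PP H n g hg hng
  have hrs := Nat.mul_le_mul_right (U A m n 0) hr1
  constructor
  · rintro ⟨h1, Q, h2⟩
    rw [List.length_append, seg_add] at h2
    obtain ⟨h3, h4⟩ := List.append_inj h2 (by simp)
    have hag := (seg_eq_iff _ _ _ _).mp (h3.symm.trans h4)
    rcases classify H (by omega) hag with ⟨n', p', b1, b2, b3⟩ |
      ⟨n', j, g', q, b1, b2, b3, b4, b5, b6, b7, b8, b9⟩
    · exact absurd (by rw [← hlen, ← h1, b3]) (len_ne_power H hg hng hg1 hr1 hr hrg b1 b2)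
    · -- for `r = m n` the period word is also `V (n+1) 0 (g-1)`
      have key : V A m n' j g' = V A m n r g ∧
          PP A m n' - U A m n' g' = PP A m n - U A m n g := by
        rcases Nat.lt_or_ge r (m n) with hlt | hge
        · obtain ⟨rfl, rfl, rfl⟩ := len_unique H b3 b4 b2 b1 hg hng hg1 hlt
            (by rw [← b5, h1, hlen])
          exact ⟨rfl, rfl⟩
        · obtain rfl : r = m n := by omega
          have hg2 := hrg rfl
          obtain ⟨e, rfl⟩ : ∃ e, g = e + 1 := ⟨g - 1, by omega⟩
          have hs := U_succ H n e hg
          obtain ⟨rfl, rfl, rfl⟩ := len_unique H (n' := n + 1) (j' := 0) (g' := e)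
            b3 b4 b2 b1 (by omega) (by omega) (by omega) (H.pos _)
            (by rw [← b5, h1, hlen, hs]; ring)
          refine ⟨?_, ?_⟩
          · rw [V, V, List.replicate_zero, List.nil_append,
              show n + 1 + g' = n + (g' + 1) by omega, Ph_succ_ne _ _ _ (H.inj n _ hg1 hg),
              Ph_append, Ph_replicate]
          · rw [PP_succ, hs]; omega
      obtain ⟨k1, k2⟩ := key
      rw [k2] at b7
      refine ⟨Q - q, b7, ?_⟩
      rw [← k1, ← b8, ← seg_conj (by omega) (fun s hs => b9 s (by omega)),
        show q + (Q - q) = Q by omega]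
      exact h3
  · rintro ⟨j, hj, rfl⟩
    obtain ⟨Q, c1, c2⟩ := run_exists H (n := n) (r := r) hg1 hg hr
    set p := (V A m n r g).length with hp
    have hjp : j ≤ p := by omega
    have h1 : ((V A m n r g).drop j ++ (V A m n r g).take j) = seg (x A m 0) (Q + j) p := by
      rw [seg_conj hjp (fun s hs => c2 s (by omega)), c1]
    refine ⟨by rw [h1, seg_length], Q + j, ?_⟩
    rw [h1, List.length_append, seg_length, seg_add]
    congr 1
    rw [seg_eq_iff]
    intro t ht
    have := c2 (j + t) (by omega)
    rwa [show Q + (j + t) = Q + j + t by omega,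
      show Q + p + (j + t) = Q + j + p + t by omega] at this

lemma squares_ncard (H : Cyc A m k) {n r g : ℕ} (hg1 : 1 ≤ g) (hg : g < k) (hr1 : 1 ≤ r) :
    Set.ncard {w | ∃ j ≤ PP A m n - U A m n g,
      w = (V A m n r g).drop j ++ (V A m n r g).take j} = PP A m n - U A m n g + 1 := by
  have hlen := V_length (A := A) (m := m) n r g
  have hU := U_pos H n g hg
  have hP := PP_lt H n g hg
  have hrs := Nat.mul_le_mul_right (U A m n 0) hr1
  have hδ : PP A m n - U A m n g < (V A m n r g).length := by omega
  have e : {w | ∃ j ≤ PP A m n - U A m n g,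
      w = (V A m n r g).drop j ++ (V A m n r g).take j} =
      (fun j => (V A m n r g).rotate j) '' Set.Iic (PP A m n - U A m n g) := by
    ext w
    simp only [Set.mem_ofPred_eq, Set.mem_image, Set.mem_Iic]
    refine exists_congr fun j => and_congr_right fun hj => ?_
    rw [List.rotate_eq_drop_append_take (by omega), eq_comm]
  rw [e, Set.InjOn.ncard_image]
  · simp [Set.ncard_eq_toFinset_card']
  · intro j hj j' hj' h
    simp only [Set.mem_Iic] at hj hj'
    rcases Nat.lt_trichotomy j j' with h1 | h1 | h1
    · exact absurd h (V_rotate_inj H hg1 hg h1 (by omega))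
    · exact h1
    · exact absurd h.symm (V_rotate_inj H hg1 hg h1 (by omega))

end Final

/-! ### Identification with the words `s_n` and `D_n` -/

lemma factor_iff {A : ℕ → α} {m : ℕ → ℕ} (H : Hyp A m) (w : List α) :
    (∃ N, w <:+: W A m 0 N) ↔ ∃ Q, w = seg (x A m 0) Q w.length := by
  constructor
  · rintro ⟨N, p, t, h⟩
    have e := W_eq_seg H 0 N
    rw [← h, List.length_append, List.length_append, seg_add, seg_add, Nat.zero_add] at e
    obtain ⟨e1, -⟩ := List.append_inj e (by simp)
    exact ⟨_, (List.append_inj e1 (by simp)).2⟩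
  · rintro ⟨Q, h⟩
    refine ⟨Q + w.length, ?_⟩
    have h1 := seg_prefix_W H 0 (Q + w.length)
    rw [seg_add, Nat.zero_add, ← h] at h1
    exact (List.suffix_append _ _).isInfix.trans h1.isInfix

/-- Unfolding of the image of a letter that is not a directive letter of the last `t` levels. -/
lemma Ph_unfold (A : ℕ → α) (m : ℕ → ℕ) (q : ℕ) (b : α) (t : ℕ) (h : ∀ j < t, b ≠ A (q + j)) :
    Ph A m (q + t) [b] =
      ((List.range t).map fun j =>
        pw (Ph A m (q + t - 1 - j) [A (q + t - 1 - j)]) (m (q + t - 1 - j))).flatten ++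
        Ph A m q [b] := by
  induction t with
  | zero => simp
  | succ t ih =>
    rw [← Nat.add_assoc, Ph_succ_ne _ _ _ (h t (by omega)), ih (fun j hj => h j (by omega)),
      List.range_succ_eq_map, List.map_cons, List.flatten_cons, List.map_map, List.append_assoc]
    congr 3
    apply List.map_congr_left
    intro j _
    simp only [Function.comp, Nat.succ_eq_add_one]
    rw [show q + t + 1 - 1 - (j + 1) = q + t - 1 - j by omega]

lemma cyc_of {k : ℕ} (hk : 2 ≤ k) {a : ℕ → α}
    (ha : ∀ i j, 1 ≤ i → i ≤ k → 1 ≤ j → j ≤ k → a i = a j → i = j)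
    {d : ℕ → ℕ} (hd : ∀ i, 1 ≤ i → 1 ≤ d i) :
    Cyc (fun n => a (n % k + 1)) (fun n => d (n + 1)) k := by
  have inj : ∀ n g, 1 ≤ g → g < k → a ((n + g) % k + 1) ≠ a (n % k + 1) := by
    intro n g h1 h2 h
    have l1 := Nat.mod_lt (n + g) (show 0 < k by omega)
    have l2 := Nat.mod_lt n (show 0 < k by omega)
    have h3 := ha _ _ (by omega) (by omega) (by omega) (by omega) h
    have h4 : n + g ≡ n + 0 [MOD k] := by simpa [Nat.ModEq] using h3
    have h5 := Nat.ModEq.add_left_cancel' n h4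
    rw [Nat.ModEq, Nat.mod_eq_of_lt h2] at h5
    simp at h5; omega
  exact { pos := fun n => hd _ (by omega)
          ne := fun n => (inj n 1 le_rfl hk).symm
          two := hk
          per := fun n => by simp
          inj := inj }

lemma s_eq {k : ℕ} (hk : 2 ≤ k) {a : ℕ → α}
    (ha : ∀ i j, 1 ≤ i → i ≤ k → 1 ≤ j → j ≤ k → a i = a j → i = j)
    {d : ℕ → ℕ} (hd0 : d 0 = 0) (hd : ∀ i, 1 ≤ i → 1 ≤ d i) (n : ℕ) :
    s k a d n = Ph (fun n => a (n % k + 1)) (fun n => d (n + 1)) n [a (n % k + 1)] := by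
  have H := cyc_of hk ha hd
  induction n using Nat.strong_induction_on with
  | _ n ih =>
  have hmax : max k 1 = k := by omega
  rcases Nat.eq_zero_or_pos n with rfl | hn
  · rw [s, S, dif_pos (by omega), Nat.zero_add, Nat.sub_add_cancel (by omega)]
    simp [Ph]
  rw [s, S, dif_neg (by omega), hmax]
  rcases Nat.lt_or_ge n k with hnk | hnk
  · -- the exponents `d_{n-j}` with `j ≥ n` vanish
    have e := Ph_unfold (fun n => a (n % k + 1)) (fun n => d (n + 1)) 0 (a (n % k + 1)) n
      (fun j hj => by
        have := H.inj j (n - j) (by omega) (by omega)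
        simpa [show j + (n - j) = n by omega] using this)
    rw [Nat.zero_add] at e
    rw [e, show k - 1 = n + (k - 1 - n) by omega, List.range_add, List.map_append,
      List.flatten_append, List.append_assoc]
    congr 1
    · congr 1
      apply List.map_congr_left
      intro j hj
      have hj := List.mem_range.mp hj
      rw [← ih (n - 1 - j) (by omega), s]
      rw [show n + (n + (k - 1 - n)) - 1 - j = n - 1 - j + (k - 1) by omega,
        show n + (n + (k - 1 - n)) + 1 - k - j = n - 1 - j + 1 by omega]
    · rw [S, dif_pos (by omega), List.map_map]
      have z : ((List.range (k - 1 - n)).map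
          ((fun j => pw (S k a d (n + (n + (k - 1 - n)) - 1 - j))
            (d (n + (n + (k - 1 - n)) + 1 - k - j))) ∘ fun t => n + t)).flatten = [] := by
        simp only [List.flatten_eq_nil_iff, List.mem_map, Function.comp]
        rintro l ⟨j, -, rfl⟩
        rw [show n + (n + (k - 1 - n)) + 1 - k - (n + j) = 0 by omega, hd0]; rfl
      rw [z, show n + (n + (k - 1 - n)) - k + 1 = n by omega]; rfl
  · obtain ⟨q, rfl⟩ : ∃ q, n = q + 1 + (k - 1) := ⟨n - k, by omega⟩
    have eA : a ((q + 1 + (k - 1)) % k + 1) = a (q % k + 1) := by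
      simp [show q + 1 + (k - 1) = q + k by omega]
    have e := Ph_unfold (fun n => a (n % k + 1)) (fun n => d (n + 1)) (q + 1)
      (a (q % k + 1)) (k - 1) (fun j hj => by
        have := H.inj q (j + 1) (by omega) (by omega)
        rw [show q + 1 + j = q + (j + 1) by omega]
        exact this.symm)
    have e' := Ph_succ_self (fun n => a (n % k + 1)) (fun n => d (n + 1)) q
    rw [eA, e, e', ← ih q (by omega), s]
    congr 1
    · congr 1
      apply List.map_congr_left
      intro j hj
      have hj := List.mem_range.mp hj
      rw [← ih _ (by omega), s]
      rw [show q + 1 + (k - 1) + (k - 1) - 1 - j = q + 1 + (k - 1) - 1 - j + (k - 1) by omega,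
        show q + 1 + (k - 1) + (k - 1) + 1 - k - j = q + 1 + (k - 1) - 1 - j + 1 by omega]
    · congr 1; omega

lemma PP_eq {k : ℕ} (hk : 2 ≤ k) {a : ℕ → α}
    (ha : ∀ i j, 1 ≤ i → i ≤ k → 1 ≤ j → j ≤ k → a i = a j → i = j)
    {d : ℕ → ℕ} (hd0 : d 0 = 0) (hd : ∀ i, 1 ≤ i → 1 ≤ d i) (n : ℕ) :
    PP (fun n => a (n % k + 1)) (fun n => d (n + 1)) n =
      ((List.range n).map (fun j => pw (s k a d (n - 1 - j)) (d (n - j)))).flatten.length := by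
  induction n with
  | zero => rfl
  | succ n ih =>
    rw [List.range_succ_eq_map, List.map_cons, List.flatten_cons, List.map_map, PP, ih,
      List.length_append, pw_length, Nat.add_comm]
    congr 1
    · rw [ta, ← s_eq hk ha hd0 hd]; rfl
    · congr 3
      funext j
      simp only [Function.comp, Nat.succ_eq_add_one]
      rw [show n + 1 - 1 - (j + 1) = n - 1 - j by omega, show n + 1 - (j + 1) = n - j by omega]

lemma D_length {k : ℕ} (hk : 2 ≤ k) {a : ℕ → α}
    (ha : ∀ i j, 1 ≤ i → i ≤ k → 1 ≤ j → j ≤ k → a i = a j → i = j)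
    {d : ℕ → ℕ} (hd0 : d 0 = 0) (hd : ∀ i, 1 ≤ i → 1 ≤ d i) (q : ℕ) :
    (D k a d q).length + U (fun n => a (n % k + 1)) (fun n => d (n + 1)) q 0 =
      PP (fun n => a (n % k + 1)) (fun n => d (n + 1)) (q + 1) := by
  have hU : U (fun n => a (n % k + 1)) (fun n => d (n + 1)) q 0 = (s k a d q).length := by
    rw [s_eq hk ha hd0 hd]; rfl
  rw [D, List.length_append, pw_length, ← PP_eq hk ha hd0 hd, PP_succ, hU]
  obtain ⟨e, he⟩ : ∃ e, d (q + 1) = e + 1 := ⟨d (q + 1) - 1, by have := hd (q + 1); omega⟩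
  rw [he, Nat.add_sub_cancel]; ring

/-- The difference between `PP` and the length of the image of the letter `A q` is unchanged
until the next use of `A q` as a directive letter. -/
lemma PP_sub_invariant {A : ℕ → α} {m : ℕ → ℕ} {k : ℕ} (H : Cyc A m k) (q t : ℕ) (ht : t < k) :
    PP A m (q + 1 + t) + U A m q 0 = ta A m (q + 1 + t) (A q) + PP A m (q + 1) := by
  induction t with
  | zero => rw [ta, Nat.add_zero, Ph_succ_self, Nat.add_comm]; rfl
  | succ t ih =>
    have h := H.inj q (1 + t) (by omega) (by omega)
    rw [← Nat.add_assoc] at h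
    have := ih (by omega)
    have e : ta A m (q + 1 + t + 1) (A q) =
        m (q + 1 + t) * ta A m (q + 1 + t) (A (q + 1 + t)) + ta A m (q + 1 + t) (A q) := by
      rw [ta, Ph_succ_ne _ _ _ h.symm, List.length_append, pw_length]; rfl
    rw [← Nat.add_assoc, PP, e]
    omega

theorem stmt18 {α : Type*} (k : ℕ) (hk : 2 ≤ k) (a : ℕ → α)
    (ha : ∀ i j, 1 ≤ i → i ≤ k → 1 ≤ j → j ≤ k → a i = a j → i = j)
    (d : ℕ → ℕ) (hd0 : d 0 = 0) (hd : ∀ i, 1 ≤ i → 1 ≤ d i) (i n r : ℕ) (hi2 : 2 ≤ i) (hik : i ≤ k) (hn : i - 1 ≤ n)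
    (hr1 : 1 ≤ r) (hrd : r ≤ d (n + 1)) (hrk : i = k → r ≤ d (n + 1) - 1) :
    ∀ v : List α,
      v = pw (s k a d n) r ++
          ((List.range (i - 2)).map
            (fun j => pw (s k a d (n - 1 - j)) (d (n - j)))).flatten ++
          s k a d (n + 1 - i) →
      {w : List α | w.length = v.length ∧ FactorS k a d (w ++ w)} =
          {w : List α | ∃ j, j ≤ (D k a d (n + 1 - i)).length ∧
              w = v.drop j ++ v.take j} ∧
        Set.ncard {w : List α | w.length = v.length ∧ FactorS k a d (w ++ w)} =
          (D k a d (n + 1 - i)).length + 1 := by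
  intro v hv
  have H := cyc_of hk ha hd
  set A : ℕ → α := fun n => a (n % k + 1) with hA
  set m : ℕ → ℕ := fun n => d (n + 1) with hm
  have hs : ∀ n, s k a d n = Ph A m n [A n] := s_eq hk ha hd0 hd
  obtain ⟨t, rfl⟩ : ∃ t, i = t + 2 := ⟨i - 2, by omega⟩
  obtain ⟨q, rfl⟩ : ∃ q, n = q + 1 + t := ⟨n - 1 - t, by omega⟩
  have hq : q + 1 + t + 1 - (t + 2) = q := by omega
  rw [hq] at hv ⊢
  -- the last factor `s_q` of `v` is the image of the letter `A q = A (n + (k+1-i))`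
  have hAq : A (q + 1 + t + (k - 1 - t)) = A q := by
    rw [show q + 1 + t + (k - 1 - t) = q + k by omega]; exact H.per q
  have hvV : v = V A m (q + 1 + t) r (k - 1 - t) := by
    rw [hv, V, Ph_append, Ph_replicate, hAq, Ph_unfold A m (q + 1) (A q) t (fun j hj => by
        have := H.inj q (1 + j) (by omega) (by omega)
        rw [← Nat.add_assoc] at this
        exact this.symm), Ph_succ_self, ← hs, ← hs, List.append_assoc, Nat.add_sub_cancel]
    congr 3
    apply List.map_congr_left
    intro j hj
    have hj := List.mem_range.mp hj
    rw [← hs, hm]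
    simp only
    rw [show q + 1 + t - 1 - j + 1 = q + 1 + t - j by omega]
  have hD : (D k a d q).length = PP A m (q + 1 + t) - U A m (q + 1 + t) (k - 1 - t) := by
    have h1 := D_length hk ha hd0 hd q
    have h2 := PP_sub_invariant H q t (by omega)
    rw [U, hAq]
    change _ + U A m q 0 = PP A m (q + 1) at h1
    omega
  have hF : ∀ w, FactorS k a d w ↔ ∃ Q, w = seg (x A m 0) Q w.length := by
    intro w
    rw [← factor_iff H.toHyp, FactorS]
    refine exists_congr fun N => ?_
    have := Ph_W A m 0 N
    rw [Nat.zero_add] at this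
    rw [hs, ← this]; rfl
  have hset : {w : List α | w.length = v.length ∧ FactorS k a d (w ++ w)} =
      {w : List α | ∃ j, j ≤ (D k a d q).length ∧ w = v.drop j ++ v.take j} := by
    ext w
    change (w.length = v.length ∧ FactorS k a d (w ++ w)) ↔
      ∃ j, j ≤ (D k a d q).length ∧ w = v.drop j ++ v.take j
    rw [hF, hD, hvV]
    exact squares_eq H (by omega) (by omega) (by omega) hr1 hrd (fun h1 h2 => by
      have := hrk (by omega)
      have := hd (q + 1 + t + 1) (by omega)
      simp only [hm] at h1
      omega) w
  refine ⟨hset, ?_⟩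
  rw [hset, hD, hvV]
  exact squares_ncard H (by omega) (by omega) hr1

end Epi
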